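/- Let ψ be a Cartan–Hadamard model function satisfying ∫₀^∞ Θ(s)^{1/(p−1)} ds < +∞ (p-stochastic incompleteness). Then every global radial solution u is strictly decreasing on (0,∞) and converges, as r → +∞, to a strictly positive limit λ > 0. -/

import Mathlib

open Real Filter MeasureTheory
open scoped ENNReal Topology

/-- The volume-to-surface ratio `Θ(r) = (∫₀ʳ ψ(s)^{n-1} ds) / ψ(r)^{n-1}`. -/
noncomputable def Theta (n : ℕ) (ψ : ℝ → ℝ) (r : ℝ) : ℝ :=
  (∫ s in (0:ℝ)..r, ψ s ^ (n - 1)) / ψ r ^ (n - 1)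

/-- A Cartan–Hadamard model function: smooth, `ψ(0)=0`, `ψ'(0)=1`, convex on `[0,∞)`,
positive on `(0,∞)`. -/
def IsCHModel (ψ : ℝ → ℝ) : Prop :=
  ContDiff ℝ (⊤ : ℕ∞) ψ ∧ ψ 0 = 0 ∧ deriv ψ 0 = 1 ∧
    (∀ r : ℝ, 0 ≤ r → 0 ≤ deriv (deriv ψ) r) ∧ (∀ r : ℝ, 0 < r → 0 < ψ r)

/-- A radial solution on `[0,T)` (with `T ∈ (0,∞]`) with initial datum `α`:
`u ∈ C¹([0,T))`, `u(0)=α`, `u'(0)=0`, `u>0` on `[0,T)`, and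
`(ψ^{n-1} |u'|^{p-2} u')' = -ψ^{n-1} u^q` on `(0,T)`. -/
structure IsRadialSolution (n : ℕ) (p q : ℝ) (ψ : ℝ → ℝ) (T : ℝ≥0∞) (α : ℝ)
    (u : ℝ → ℝ) : Prop where
  init : u 0 = α
  deriv_init : deriv u 0 = 0
  pos : ∀ r : ℝ, 0 ≤ r → ENNReal.ofReal r < T → 0 < u r
  diff : ∀ r : ℝ, 0 ≤ r → ENNReal.ofReal r < T → DifferentiableAt ℝ u r
  deriv_cont : ContinuousOn (deriv u) {r : ℝ | 0 ≤ r ∧ ENNReal.ofReal r < T}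
  eqn : ∀ r : ℝ, 0 < r → ENNReal.ofReal r < T →
    HasDerivAt (fun s => ψ s ^ (n - 1) * |deriv u s| ^ (p - 2) * deriv u s)
      (-(ψ r ^ (n - 1) * u r ^ q)) r

/-- The energy function `F_u(r) = ((p-1)/p)|u'(r)|^p + u(r)^{q+1}/(q+1)`. -/
noncomputable def energyF (p q : ℝ) (u : ℝ → ℝ) (r : ℝ) : ℝ :=
  (p - 1) / p * |deriv u r| ^ p + u r ^ (q + 1) / (q + 1)

/-- The Pohozaev function
`P_u(r) = (∫₀ʳ ψ^{n-1}) F_u(r) + (ψ(r)^{n-1}/(q+1)) |u'(r)|^{p-2} u'(r) u(r)`. -/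
noncomputable def pohozaevP (n : ℕ) (p q : ℝ) (ψ u : ℝ → ℝ) (r : ℝ) : ℝ :=
  (∫ s in (0:ℝ)..r, ψ s ^ (n - 1)) * energyF p q u r +
    ψ r ^ (n - 1) / (q + 1) * (|deriv u r| ^ (p - 2) * deriv u r * u r)

/-- `K(r) = ((p-1)/p + 1/(q+1)) ψ(r)^{n-1} - (n-1)(ψ'(r)/ψ(r)) ∫₀ʳ ψ^{n-1}`. -/
noncomputable def Kfun (n : ℕ) (p q : ℝ) (ψ : ℝ → ℝ) (r : ℝ) : ℝ :=
  ((p - 1) / p + 1 / (q + 1)) * ψ r ^ (n - 1) -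
    ((n : ℝ) - 1) * (deriv ψ r / ψ r) * ∫ s in (0:ℝ)..r, ψ s ^ (n - 1)

/-- Condition (a): `r^γ ψ'(r)/ψ(r) → ℓ ∈ (0,∞)` for some `γ ∈ [0,1)`. -/
def CondA (ψ : ℝ → ℝ) : Prop :=
  ∃ γ ℓ : ℝ, 0 ≤ γ ∧ γ < 1 ∧ 0 < ℓ ∧
    Tendsto (fun r : ℝ => r ^ γ * deriv ψ r / ψ r) atTop (nhds ℓ)

/-- Condition (b): `ψ'/ψ → +∞` and `(ψ/ψ') (log(ψ'/ψ))' → 0`. -/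
def CondB (ψ : ℝ → ℝ) : Prop :=
  Tendsto (fun r : ℝ => deriv ψ r / ψ r) atTop atTop ∧
    Tendsto (fun r : ℝ => ψ r / deriv ψ r *
      deriv (fun s : ℝ => Real.log (deriv ψ s / ψ s)) r) atTop (nhds 0)

theorem hasDerivAt_integral_pow {ψ : ℝ → ℝ} (hψ : Continuous ψ) (m : ℕ) (r : ℝ) :
    HasDerivAt (fun r => ∫ s in (0:ℝ)..r, ψ s ^ m) (ψ r ^ m) r :=
  ((hψ.pow m).integral_hasStrictDerivAt 0 r).hasDerivAt

namespace IsCHModel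

variable {ψ : ℝ → ℝ} {r : ℝ}

theorem continuous (hψ : IsCHModel ψ) : Continuous ψ := hψ.1.continuous

theorem pos (hψ : IsCHModel ψ) (hr : 0 < r) : 0 < ψ r := hψ.2.2.2.2 r hr

theorem nonneg (hψ : IsCHModel ψ) (hr : 0 ≤ r) : 0 ≤ ψ r := by
  rcases hr.eq_or_lt with rfl | h
  · exact hψ.2.1.ge
  · exact (hψ.pos h).le

theorem hasDerivAt (hψ : IsCHModel ψ) (r : ℝ) : HasDerivAt ψ (deriv ψ r) r :=
  (hψ.1.differentiable (by simp) r).hasDerivAt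

theorem hasDerivAt_deriv (hψ : IsCHModel ψ) (r : ℝ) :
    HasDerivAt (deriv ψ) (deriv (deriv ψ) r) r := by
  have h : ContDiff ℝ 1 (deriv ψ) :=
    ContDiff.deriv' (hψ.1.of_le (by norm_cast))
  exact (h.differentiable (by simp) r).hasDerivAt

theorem integral_nonneg (hψ : IsCHModel ψ) (m : ℕ) (hr : 0 ≤ r) :
    0 ≤ ∫ s in (0:ℝ)..r, ψ s ^ m :=
  intervalIntegral.integral_nonneg hr fun _ hs => pow_nonneg (hψ.nonneg hs.1) m

theorem integral_pos (hψ : IsCHModel ψ) (m : ℕ) (hr : 0 < r) :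
    0 < ∫ s in (0:ℝ)..r, ψ s ^ m :=
  intervalIntegral.intervalIntegral_pos_of_pos_on
    ((hψ.continuous.pow m).intervalIntegrable 0 r) (fun _ hs => pow_pos (hψ.pos hs.1) m) hr

/-- Convexity of `ψ` bounds the volume from below by `ψⁿ / (n ψ')`. -/
theorem pow_le_mul_integral (hψ : IsCHModel ψ) (m : ℕ) (hr : 0 ≤ r) :
    ψ r ^ (m + 1) ≤ (m + 1) * deriv ψ r * ∫ s in (0:ℝ)..r, ψ s ^ m := by
  set V : ℝ → ℝ := fun r => ∫ s in (0:ℝ)..r, ψ s ^ m with hV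
  have hD : ∀ x, HasDerivAt (fun x => ((m:ℝ) + 1) * deriv ψ x * V x - ψ x ^ (m + 1))
      (((m:ℝ) + 1) * deriv (deriv ψ) x * V x) x := by
    intro x
    have := (((hψ.hasDerivAt_deriv x).const_mul ((m:ℝ) + 1)).mul
      (hasDerivAt_integral_pow hψ.continuous m x)).sub ((hψ.hasDerivAt x).pow (m + 1))
    refine this.congr_deriv ?_
    push_cast
    simp only [hV]
    ring
  have hmono : MonotoneOn (fun x => ((m:ℝ) + 1) * deriv ψ x * V x - ψ x ^ (m + 1))
      (Set.Ici 0) := by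
    refine monotoneOn_of_deriv_nonneg (convex_Ici 0)
      (fun x _ => (hD x).continuousAt.continuousWithinAt)
      (fun x _ => (hD x).differentiableAt.differentiableWithinAt) fun x hx => ?_
    rw [interior_Ici] at hx
    rw [(hD x).deriv]
    have h1 := hψ.2.2.2.1 x (le_of_lt hx)
    have h2 := hψ.integral_nonneg m (le_of_lt hx)
    positivity
  have := hmono Set.self_mem_Ici (Set.mem_Ici.2 hr) hr
  simp only [hψ.2.1, hV, intervalIntegral.integral_same] at this
  simp only [ne_eq, Nat.add_eq_zero_iff, one_ne_zero, and_false, not_false_eq_true, zero_pow,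
    mul_zero, sub_zero] at this
  linarith

/-- The radial weight appearing in the derivative of the Pohozaev function is nonpositive in the
critical and supercritical range. -/
theorem Kfun_nonpos (hψ : IsCHModel ψ) {n : ℕ} {p q : ℝ} (hn : 2 ≤ n) (hp1 : 1 < p)
    (hpn : p < n) (hq : (n : ℝ) * p / ((n : ℝ) - p) - 1 ≤ q) (hr : 0 < r) :
    Kfun n p q ψ r ≤ 0 := by
  obtain ⟨m, rfl⟩ : ∃ m, n = m + 1 := ⟨n - 1, by omega⟩
  have hψr := hψ.pos hr
  have hconv := hψ.pow_le_mul_integral m hr.le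
  have hn0 : (0:ℝ) < (m:ℝ) + 1 := by positivity
  simp only [Kfun, Nat.add_sub_cancel]
  push_cast at *
  set V := ∫ s in (0:ℝ)..r, ψ s ^ m
  have hd : 0 < (m:ℝ) + 1 - p := by linarith
  have hc : (p - 1) / p + 1 / (q + 1) ≤ m / (m + 1) := by
    have h0 : 0 < ((m:ℝ) + 1) * p / ((m:ℝ) + 1 - p) := by positivity
    have h1 : 1 / (q + 1) ≤ 1 / (((m:ℝ) + 1) * p / ((m:ℝ) + 1 - p)) :=
      one_div_le_one_div_of_le h0 (by linarith)
    have h2 : (p - 1) / p + 1 / (((m:ℝ) + 1) * p / ((m:ℝ) + 1 - p)) = m / (m + 1) := by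
      have : p ≠ 0 := by linarith
      field_simp
      ring
    linarith
  have h1 := mul_le_mul_of_nonneg_right hc (pow_nonneg hψr.le m)
  have h2 : (m:ℝ) / (m + 1) * ψ r ^ m ≤ ((m:ℝ) + 1 - 1) * (deriv ψ r / ψ r) * V := by
    have h3 : ψ r ^ m / (m + 1) ≤ deriv ψ r / ψ r * V := by
      rw [div_mul_eq_mul_div, div_le_div_iff₀ hn0 hψr, ← pow_succ]
      linarith
    have := mul_le_mul_of_nonneg_left h3 (Nat.cast_nonneg (α := ℝ) m)
    calc (m:ℝ) / (m + 1) * ψ r ^ m = m * (ψ r ^ m / (m + 1)) := by ring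
      _ ≤ _ := this
      _ = _ := by ring
  linarith

theorem Theta_nonneg (hψ : IsCHModel ψ) (n : ℕ) (hr : 0 ≤ r) : 0 ≤ Theta n ψ r :=
  div_nonneg (hψ.integral_nonneg _ hr) (pow_nonneg (hψ.nonneg hr) _)

theorem continuousAt_Theta (hψ : IsCHModel ψ) (n : ℕ) (hr : 0 < r) :
    ContinuousAt (Theta n ψ) r :=
  (hasDerivAt_integral_pow hψ.continuous (n - 1) r).continuousAt.div
    (hψ.continuous.pow (n - 1)).continuousAt (pow_pos (hψ.pos hr) _).ne'

end IsCHModel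

/-- The flux `-ψ^{n-1} |u'|^{p-2} u'` of a radial function. -/
noncomputable def radialFlux (n : ℕ) (p : ℝ) (ψ u : ℝ → ℝ) (r : ℝ) : ℝ :=
  -(ψ r ^ (n - 1) * |deriv u r| ^ (p - 2) * deriv u r)

theorem tendsto_abs_rpow_mul_self {p : ℝ} (hp1 : 1 < p) :
    Tendsto (fun x : ℝ => |x| ^ (p - 2) * x) (𝓝 0) (𝓝 0) := by
  have h : Tendsto (fun x : ℝ => |x| ^ (p - 1)) (𝓝 0) (𝓝 0) := by
    have : ContinuousAt (fun x : ℝ => |x| ^ (p - 1)) 0 :=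
      (continuous_abs.rpow_const fun _ => Or.inr (by linarith)).continuousAt
    simpa [ContinuousAt, Real.zero_rpow (by linarith : p - 1 ≠ 0)] using this
  refine squeeze_zero_norm (fun x => ?_) h
  rcases eq_or_ne x 0 with rfl | hx
  · simpa using Real.rpow_nonneg le_rfl _
  · rw [norm_mul, Real.norm_of_nonneg (by positivity), Real.norm_eq_abs,
      ← Real.rpow_add_one (abs_ne_zero.2 hx)]
    exact le_of_eq (by ring_nf)

namespace IsRadialSolution

variable {n : ℕ} {p q α r : ℝ} {ψ u : ℝ → ℝ}

theorem u_pos (hu : IsRadialSolution n p q ψ ⊤ α u) (hr : 0 ≤ r) : 0 < u r :=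
  hu.pos r hr ENNReal.ofReal_lt_top

theorem hasDerivAt (hu : IsRadialSolution n p q ψ ⊤ α u) (hr : 0 ≤ r) :
    HasDerivAt u (deriv u r) r :=
  (hu.diff r hr ENNReal.ofReal_lt_top).hasDerivAt

theorem continuousOn (hu : IsRadialSolution n p q ψ ⊤ α u) : ContinuousOn u (Set.Ici 0) :=
  fun _ hr => (hu.hasDerivAt hr).continuousAt.continuousWithinAt

theorem continuousOn_deriv (hu : IsRadialSolution n p q ψ ⊤ α u) :
    ContinuousOn (deriv u) (Set.Ici 0) :=
  hu.deriv_cont.mono fun _ hr => ⟨hr, ENNReal.ofReal_lt_top⟩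

theorem hasDerivAt_radialFlux (hu : IsRadialSolution n p q ψ ⊤ α u) (hr : 0 < r) :
    HasDerivAt (radialFlux n p ψ u) (ψ r ^ (n - 1) * u r ^ q) r :=
  (hu.eqn r hr ENNReal.ofReal_lt_top).neg.congr_deriv (neg_neg _)

theorem radialFlux_zero (hu : IsRadialSolution n p q ψ ⊤ α u) : radialFlux n p ψ u 0 = 0 := by
  simp [radialFlux, hu.deriv_init]

theorem continuousOn_radialFlux (hψ : IsCHModel ψ) (hp1 : 1 < p)
    (hu : IsRadialSolution n p q ψ ⊤ α u) : ContinuousOn (radialFlux n p ψ u) (Set.Ici 0) := by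
  intro r hr
  rcases (Set.mem_Ici.1 hr).eq_or_lt with rfl | h
  · have h1 : Tendsto (deriv u) (𝓝[Set.Ici 0] 0) (𝓝 0) := by
      simpa [ContinuousWithinAt, hu.deriv_init] using hu.continuousOn_deriv 0 hr
    have h2 : Tendsto (fun x => ψ x ^ (n - 1)) (𝓝[Set.Ici 0] 0) (𝓝 (ψ 0 ^ (n - 1))) :=
      (hψ.continuous.pow (n - 1)).continuousWithinAt
    have h3 := (h2.mul ((tendsto_abs_rpow_mul_self hp1).comp h1)).neg
    rw [ContinuousWithinAt, hu.radialFlux_zero]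
    change Tendsto (fun x => -(ψ x ^ (n - 1) * |deriv u x| ^ (p - 2) * deriv u x)) _ _
    simpa [Function.comp_def, mul_assoc] using h3
  · exact (hu.hasDerivAt_radialFlux h).continuousAt.continuousWithinAt

theorem radialFlux_pos (hψ : IsCHModel ψ) (hp1 : 1 < p)
    (hu : IsRadialSolution n p q ψ ⊤ α u) (hr : 0 < r) : 0 < radialFlux n p ψ u r := by
  have hmono : StrictMonoOn (radialFlux n p ψ u) (Set.Ici 0) := by
    refine strictMonoOn_of_deriv_pos (convex_Ici 0) (hu.continuousOn_radialFlux hψ hp1)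
      fun x hx => ?_
    rw [interior_Ici] at hx
    rw [(hu.hasDerivAt_radialFlux hx).deriv]
    exact mul_pos (pow_pos (hψ.pos hx) _) (Real.rpow_pos_of_pos (hu.u_pos (le_of_lt hx)) _)
  simpa [hu.radialFlux_zero] using hmono Set.self_mem_Ici (Set.mem_Ici.2 hr.le) hr

theorem deriv_neg (hψ : IsCHModel ψ) (hp1 : 1 < p)
    (hu : IsRadialSolution n p q ψ ⊤ α u) (hr : 0 < r) : deriv u r < 0 := by
  by_contra! h
  have h1 := hu.radialFlux_pos hψ hp1 hr
  have h2 : 0 ≤ ψ r ^ (n - 1) * |deriv u r| ^ (p - 2) * deriv u r :=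
    mul_nonneg (mul_nonneg (pow_nonneg (hψ.nonneg hr.le) _)
      (Real.rpow_nonneg (abs_nonneg _) _)) h
  simp only [radialFlux] at h1
  linarith

theorem strictAntiOn (hψ : IsCHModel ψ) (hp1 : 1 < p)
    (hu : IsRadialSolution n p q ψ ⊤ α u) : StrictAntiOn u (Set.Ici 0) := by
  refine strictAntiOn_of_deriv_neg (convex_Ici 0) hu.continuousOn fun x hx => ?_
  rw [interior_Ici] at hx
  exact hu.deriv_neg hψ hp1 hx

theorem radialFlux_eq (hψ : IsCHModel ψ) (hp1 : 1 < p)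
    (hu : IsRadialSolution n p q ψ ⊤ α u) (hr : 0 < r) :
    radialFlux n p ψ u r = ψ r ^ (n - 1) * (-deriv u r) ^ (p - 1) := by
  have h := hu.deriv_neg hψ hp1 hr
  have h1 : (-deriv u r) ^ (p - 1) = (-deriv u r) ^ (p - 2) * (-deriv u r) := by
    rw [← Real.rpow_add_one (by linarith)]
    ring_nf
  rw [radialFlux, abs_of_neg h, h1]
  ring

theorem pohozaevP_eq :
    pohozaevP n p q ψ u = fun r => (∫ s in (0:ℝ)..r, ψ s ^ (n - 1)) *
      ((p - 1) / p * |deriv u r| ^ p + u r ^ (q + 1) / (q + 1)) -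
        radialFlux n p ψ u r * u r / (q + 1) := by
  funext r
  simp only [pohozaevP, energyF, radialFlux]
  ring

theorem abs_deriv_rpow (hψ : IsCHModel ψ) (hp1 : 1 < p)
    (hu : IsRadialSolution n p q ψ ⊤ α u) (hr : 0 < r) :
    |deriv u r| ^ p = (radialFlux n p ψ u r / ψ r ^ (n - 1)) ^ (p / (p - 1)) := by
  have h := hu.deriv_neg hψ hp1 hr
  have hS : ψ r ^ (n - 1) ≠ 0 := (pow_pos (hψ.pos hr) _).ne'
  rw [hu.radialFlux_eq hψ hp1 hr, mul_div_cancel_left₀ _ hS, abs_of_neg h,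
    ← Real.rpow_mul (by linarith), mul_div_cancel₀ _ (by linarith : p - 1 ≠ 0)]

theorem hasDerivAt_pohozaevP (hψ : IsCHModel ψ) (hn : 2 ≤ n) (hp1 : 1 < p) (hq : 0 < q + 1)
    (hu : IsRadialSolution n p q ψ ⊤ α u) (hr : 0 < r) :
    HasDerivAt (pohozaevP n p q ψ u) (Kfun n p q ψ r * |deriv u r| ^ p) r := by
  have hψr := hψ.pos hr
  have hur := hu.u_pos hr.le
  have hneg := hu.deriv_neg hψ hp1 hr
  have hS : 0 < ψ r ^ (n - 1) := pow_pos hψr _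
  have hW := hu.radialFlux_pos hψ hp1 hr
  have hz : 0 < radialFlux n p ψ u r / ψ r ^ (n - 1) := div_pos hW hS
  have hrpow : (radialFlux n p ψ u r / ψ r ^ (n - 1)) ^ (p / (p - 1) - 1) = -deriv u r := by
    rw [hu.radialFlux_eq hψ hp1 hr, mul_div_cancel_left₀ _ hS.ne', ← Real.rpow_mul (by linarith)]
    have : (p - 1) * (p / (p - 1) - 1) = 1 := by
      have : p - 1 ≠ 0 := by linarith
      field_simp
      ring
    rw [this, Real.rpow_one]
  have hpow : |deriv u r| ^ p = (-deriv u r) ^ (p - 1) * (-deriv u r) := by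
    rw [abs_of_neg hneg, ← Real.rpow_add_one (by linarith)]
    ring_nf
  have hS' := (hψ.hasDerivAt r).pow (n - 1)
  have hz' := ((hu.hasDerivAt_radialFlux hr).div hS' hS.ne').rpow_const (p := p / (p - 1))
    (Or.inl hz.ne')
  have habs := hz'.congr_of_eventuallyEq (f₁ := fun x => |deriv u x| ^ p) (by
    filter_upwards [lt_mem_nhds hr] with x hx
    exact hu.abs_deriv_rpow hψ hp1 hx)
  have hu' := (hu.hasDerivAt hr.le).rpow_const (p := q + 1) (Or.inl hur.ne')
  have hP := ((hasDerivAt_integral_pow hψ.continuous (n - 1) r).mul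
    ((habs.const_mul ((p - 1) / p)).add (hu'.div_const (q + 1)))).sub
    (((hu.hasDerivAt_radialFlux hr).mul (hu.hasDerivAt hr.le)).div_const (q + 1))
  rw [pohozaevP_eq]
  refine hP.congr_deriv ?_
  have hu1 : u r ^ (q + 1) = u r ^ q * u r := Real.rpow_add_one hur.ne' q
  obtain ⟨m, rfl⟩ : ∃ m, n = m + 2 := ⟨n - 2, by omega⟩
  simp only [Pi.div_apply, Pi.pow_apply, Pi.add_apply, Kfun, add_sub_cancel_right] at hrpow ⊢
  rw [hrpow, hpow, hu1, hu.radialFlux_eq hψ hp1 hr]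
  have hm : m + 2 - 1 = m + 1 := rfl
  simp only [hm, Nat.add_sub_cancel]
  have : p ≠ 0 := by linarith
  have : p - 1 ≠ 0 := by linarith
  push_cast
  field_simp
  ring

theorem pohozaevP_nonpos (hψ : IsCHModel ψ) (hn : 2 ≤ n) (hp1 : 1 < p) (hpn : p < n)
    (hq : (n : ℝ) * p / ((n : ℝ) - p) - 1 ≤ q) (hq1 : 0 < q + 1)
    (hu : IsRadialSolution n p q ψ ⊤ α u) (hr : 0 ≤ r) : pohozaevP n p q ψ u r ≤ 0 := by
  have hcont : ContinuousOn (pohozaevP n p q ψ u) (Set.Ici 0) := by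
    rw [pohozaevP_eq]
    have hV : ContinuousOn (fun r => ∫ s in (0:ℝ)..r, ψ s ^ (n - 1)) (Set.Ici 0) := fun x _ =>
      (hasDerivAt_integral_pow hψ.continuous (n - 1) x).continuousAt.continuousWithinAt
    have hd : ContinuousOn (fun r => |deriv u r| ^ p) (Set.Ici 0) :=
      hu.continuousOn_deriv.abs.rpow_const fun _ _ => Or.inr (by linarith)
    have hu' : ContinuousOn (fun r => u r ^ (q + 1)) (Set.Ici 0) :=
      hu.continuousOn.rpow_const fun _ _ => Or.inr hq1.le
    exact (hV.mul ((continuousOn_const.mul hd).add (hu'.div_const _))).sub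
      (((hu.continuousOn_radialFlux hψ hp1).mul hu.continuousOn).div_const _)
  have hanti : AntitoneOn (pohozaevP n p q ψ u) (Set.Ici 0) := by
    refine antitoneOn_of_deriv_nonpos (convex_Ici 0) hcont (fun x hx => ?_) fun x hx => ?_
    · rw [interior_Ici] at hx
      exact (hu.hasDerivAt_pohozaevP hψ hn hp1 hq1 hx).differentiableAt.differentiableWithinAt
    · rw [interior_Ici] at hx
      rw [(hu.hasDerivAt_pohozaevP hψ hn hp1 hq1 hx).deriv]
      exact mul_nonpos_of_nonpos_of_nonneg (hψ.Kfun_nonpos hn hp1 hpn hq hx)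
        (Real.rpow_nonneg (abs_nonneg _) _)
  have h := hanti Set.self_mem_Ici (Set.mem_Ici.2 hr) hr
  rw [pohozaevP_eq] at h ⊢
  simpa [hu.radialFlux_zero] using h

/-- The mean of `u^q` over the ball of radius `r` is controlled by the power
`(q+1)(p-1)/p` of `u r`. -/
theorem exists_radialFlux_le (hψ : IsCHModel ψ) (hn : 2 ≤ n) (hp1 : 1 < p) (hpn : p < n)
    (hq : (n : ℝ) * p / ((n : ℝ) - p) - 1 ≤ q) (hq1 : 0 < q + 1)
    (hu : IsRadialSolution n p q ψ ⊤ α u) :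
    ∃ C, 0 < C ∧ ∀ r, 1 ≤ r → radialFlux n p ψ u r ≤
      C * u r ^ ((q + 1) * (p - 1) / p) * ∫ s in (0:ℝ)..r, ψ s ^ (n - 1) := by
  set κ := (q + 1) * (p - 1) / p with hκ
  set V : ℝ → ℝ := fun r => ∫ s in (0:ℝ)..r, ψ s ^ (n - 1) with hV
  set W := radialFlux n p ψ u with hW
  have hVpos : ∀ {x}, 0 < x → 0 < V x := fun hx => hψ.integral_pos (n - 1) hx
  have hWpos : ∀ {x}, 0 < x → 0 < W x := fun hx => hu.radialFlux_pos hψ hp1 hx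
  have hD : ∀ {x}, 0 < x → HasDerivAt (fun x => log (W x) - log (V x) - κ * log (u x))
      (ψ x ^ (n - 1) * u x ^ q / W x - ψ x ^ (n - 1) / V x - κ * (deriv u x / u x)) x :=
    fun {x} hx => (((hu.hasDerivAt_radialFlux hx).log (hWpos hx).ne').sub
      ((hasDerivAt_integral_pow hψ.continuous (n - 1) x).log (hVpos hx).ne')).sub
      (((hu.hasDerivAt hx.le).log (hu.u_pos hx.le).ne').const_mul κ)
  have hanti : AntitoneOn (fun x => log (W x) - log (V x) - κ * log (u x)) (Set.Ioi 0) := by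
    refine antitoneOn_of_deriv_nonpos (convex_Ioi 0)
      (fun x hx => (hD hx).continuousAt.continuousWithinAt) (fun x hx => ?_) fun x hx => ?_
    · rw [interior_Ioi] at hx
      exact (hD hx).differentiableAt.differentiableWithinAt
    rw [interior_Ioi] at hx
    rw [(hD hx).deriv]
    have hx0 : 0 < x := hx
    have hP := hu.pohozaevP_nonpos hψ hn hp1 hpn hq hq1 hx0.le
    have hneg := hu.deriv_neg hψ hp1 hx0
    have hux := hu.u_pos hx0.le
    have hVx := hVpos hx0
    have hWx := hWpos hx0
    have hS : 0 < ψ x ^ (n - 1) := pow_pos (hψ.pos hx0) _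
    have hWS : W x = ψ x ^ (n - 1) * (-deriv u x) ^ (p - 1) := hu.radialFlux_eq hψ hp1 hx0
    have hpow : |deriv u x| ^ p = (-deriv u x) ^ (p - 1) * (-deriv u x) := by
      rw [abs_of_neg hneg, ← Real.rpow_add_one (by linarith)]
      ring_nf
    have hu1 : u x ^ (q + 1) = u x ^ q * u x := Real.rpow_add_one hux.ne' q
    rw [pohozaevP_eq] at hP
    simp only [hpow, hu1] at hP
    have hid : ψ x ^ (n - 1) * u x ^ q / W x - ψ x ^ (n - 1) / V x - κ * (deriv u x / u x) =
        (q + 1) * ψ x ^ (n - 1) / (W x * V x * u x) * (V x *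
          ((p - 1) / p * ((-deriv u x) ^ (p - 1) * (-deriv u x)) + u x ^ q * u x / (q + 1)) -
          W x * u x / (q + 1)) := by
      have hB : 0 < (-deriv u x) ^ (p - 1) := Real.rpow_pos_of_pos (by linarith) _
      have : p ≠ 0 := by linarith
      rw [hWS, hκ]
      field_simp
      ring
    rw [hid]
    exact mul_nonpos_of_nonneg_of_nonpos (by positivity) hP
  refine ⟨exp (log (W 1) - log (V 1) - κ * log (u 1)), exp_pos _, fun r hr => ?_⟩
  have hr0 : 0 < r := by linarith
  have h := hanti (Set.mem_Ioi.2 one_pos) (Set.mem_Ioi.2 hr0) hr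
  have hur := hu.u_pos hr0.le
  rw [← log_le_log_iff (hWpos hr0) (by have := hVpos hr0; positivity),
    log_mul (by positivity) (hVpos hr0).ne', log_mul (exp_pos _).ne' (by positivity), log_exp,
    log_rpow hur]
  simp only at h
  linarith

/-- The logarithmic derivative of `u` is controlled by `Θ^{1/(p-1)}`. -/
theorem exists_neg_deriv_le (hψ : IsCHModel ψ) (hn : 2 ≤ n) (hp1 : 1 < p) (hpn : p < n)
    (hq : (n : ℝ) * p / ((n : ℝ) - p) - 1 ≤ q) (hu : IsRadialSolution n p q ψ ⊤ α u) :
    ∃ C, 0 < C ∧ ∀ r, 1 ≤ r → -deriv u r ≤ C * Theta n ψ r ^ (1 / (p - 1)) * u r := by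
  have hqp : p ≤ q + 1 := by
    have : p ≤ (n : ℝ) * p / ((n : ℝ) - p) := by
      rw [le_div_iff₀ (by linarith)]
      nlinarith
    linarith
  have hp0 : 0 < p - 1 := by linarith
  obtain ⟨C, hC, hle⟩ := hu.exists_radialFlux_le hψ hn hp1 hpn hq (by linarith)
  set κ := (q + 1) * (p - 1) / p with hκ
  have hκp : 0 ≤ κ - (p - 1) := by
    rw [hκ, sub_nonneg, le_div_iff₀ (by linarith)]
    nlinarith
  have hu0 := hu.u_pos le_rfl
  refine ⟨(C * u 0 ^ (κ - (p - 1))) ^ (1 / (p - 1)), by positivity, fun r hr => ?_⟩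
  have hr0 : 0 < r := by linarith
  have hneg := hu.deriv_neg hψ hp1 hr0
  have hur := hu.u_pos hr0.le
  have hS : 0 < ψ r ^ (n - 1) := pow_pos (hψ.pos hr0) _
  have hΘ := hψ.Theta_nonneg n hr0.le
  have h1 : (-deriv u r) ^ (p - 1) ≤ C * u r ^ κ * Theta n ψ r := by
    have := hle r hr
    rw [hu.radialFlux_eq hψ hp1 hr0] at this
    rw [Theta, mul_div_assoc', le_div_iff₀ hS]
    linarith
  have h2 : u r ^ κ ≤ u 0 ^ (κ - (p - 1)) * u r ^ (p - 1) := by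
    have : u r ^ κ = u r ^ (κ - (p - 1)) * u r ^ (p - 1) := by
      rw [← Real.rpow_add hur]
      ring_nf
    rw [this]
    have := (hu.strictAntiOn hψ hp1).antitoneOn Set.self_mem_Ici (Set.mem_Ici.2 hr0.le) hr0.le
    gcongr
  have h3 : (-deriv u r) ^ (p - 1) ≤
      C * u 0 ^ (κ - (p - 1)) * Theta n ψ r * u r ^ (p - 1) := by
    calc _ ≤ _ := h1
      _ ≤ C * (u 0 ^ (κ - (p - 1)) * u r ^ (p - 1)) * Theta n ψ r := by gcongr
      _ = _ := by ring
  have h4 := Real.rpow_le_rpow (by have : 0 < -deriv u r := by linarith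
                                   positivity) h3 (by positivity : 0 ≤ 1 / (p - 1))
  rwa [← Real.rpow_mul (by linarith), mul_one_div_cancel hp0.ne', Real.rpow_one,
    Real.mul_rpow (by positivity) (by positivity), Real.mul_rpow (by positivity) hΘ,
    ← Real.rpow_mul hur.le, mul_one_div_cancel hp0.ne', Real.rpow_one] at h4

theorem exists_pos_le (hψ : IsCHModel ψ) (hn : 2 ≤ n) (hp1 : 1 < p) (hpn : p < n)
    (hq : (n : ℝ) * p / ((n : ℝ) - p) - 1 ≤ q)
    (hpi : IntegrableOn (fun s : ℝ => Theta n ψ s ^ (1 / (p - 1))) (Set.Ioi (0:ℝ)))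
    (hu : IsRadialSolution n p q ψ ⊤ α u) : ∃ c, 0 < c ∧ ∀ r, 1 ≤ r → c ≤ u r := by
  obtain ⟨C, hC, hle⟩ := hu.exists_neg_deriv_le hψ hn hp1 hpn hq
  have hp0 : 0 < p - 1 := by linarith
  set g : ℝ → ℝ := fun s => Theta n ψ s ^ (1 / (p - 1)) with hg
  have hg0 : ∀ x ∈ Set.Ioi (0:ℝ), 0 ≤ g x := fun x hx =>
    Real.rpow_nonneg (hψ.Theta_nonneg n (le_of_lt hx)) _
  have hgc : ContinuousOn g (Set.Ioi 0) := fun x hx =>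
    ((hψ.continuousAt_Theta n hx).rpow_const (Or.inr (by positivity))).continuousWithinAt
  have hG : ∀ {x}, 0 < x → HasDerivAt (fun x => ∫ s in (1:ℝ)..x, g s) (g x) x := by
    intro x hx
    refine intervalIntegral.integral_hasDerivAt_right ?_
      (hgc.stronglyMeasurableAtFilter isOpen_Ioi x hx) (hgc.continuousAt (Ioi_mem_nhds hx))
    refine (hgc.mono fun y hy => ?_).intervalIntegrable
    exact lt_of_lt_of_le (lt_min one_pos hx) hy.1
  have hD : ∀ {x}, 0 < x → HasDerivAt (fun x => log (u x) + C * ∫ s in (1:ℝ)..x, g s)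
      (deriv u x / u x + C * g x) x := fun {x} hx =>
    ((hu.hasDerivAt hx.le).log (hu.u_pos hx.le).ne').add ((hG hx).const_mul C)
  have hmono : MonotoneOn (fun x => log (u x) + C * ∫ s in (1:ℝ)..x, g s) (Set.Ici 1) := by
    refine monotoneOn_of_deriv_nonneg (convex_Ici 1)
      (fun x hx => (hD (one_pos.trans_le hx)).continuousAt.continuousWithinAt)
      (fun x hx => ?_) fun x hx => ?_
    · rw [interior_Ici] at hx
      exact (hD (one_pos.trans hx)).differentiableAt.differentiableWithinAt
    · rw [interior_Ici] at hx
      rw [(hD (one_pos.trans hx)).deriv]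
      have hux := hu.u_pos (one_pos.trans hx).le
      have h := hle x (le_of_lt hx)
      have : -(C * g x) ≤ deriv u x / u x := by
        rw [le_div_iff₀ hux]
        linarith
      linarith
  refine ⟨exp (log (u 1) - C * ∫ s in Set.Ioi 0, g s), exp_pos _, fun r hr => ?_⟩
  have hur := hu.u_pos (zero_le_one.trans hr)
  rw [← le_log_iff_exp_le hur]
  have h := hmono Set.self_mem_Ici (Set.mem_Ici.2 hr) hr
  simp only [intervalIntegral.integral_same, mul_zero, add_zero] at h
  have hint : ∫ s in (1:ℝ)..r, g s ≤ ∫ s in Set.Ioi 0, g s := by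
    rw [intervalIntegral.integral_of_le hr]
    refine setIntegral_mono_set hpi ?_ ?_
    · exact (ae_restrict_iff' measurableSet_Ioi).2 (Eventually.of_forall hg0)
    · exact LE.le.eventuallyLE fun y hy => one_pos.trans hy.1
  have := mul_le_mul_of_nonneg_left hint hC.le
  linarith

end IsRadialSolution

/-- in the `p`-stochastically incomplete case, every global radial solution
is strictly decreasing and converges to a strictly positive limit. -/
theorem statement_9 (n : ℕ) (hn : 2 ≤ n) (p q : ℝ) (hp1 : 1 < p) (hpn : p < n)
    (hq : (n : ℝ) * p / ((n : ℝ) - p) - 1 ≤ q)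
    (ψ : ℝ → ℝ) (hψ : IsCHModel ψ)
    (hpi : IntegrableOn (fun s : ℝ => Theta n ψ s ^ (1 / (p - 1))) (Set.Ioi (0:ℝ)))
    (α : ℝ) (hα : 0 < α)
    (u : ℝ → ℝ) (hu : IsRadialSolution n p q ψ ⊤ α u) :
    StrictAntiOn u (Set.Ioi (0:ℝ)) ∧
      ∃ lam : ℝ, 0 < lam ∧ Tendsto u atTop (nhds lam) := by
  refine ⟨(hu.strictAntiOn hψ hp1).mono Set.Ioi_subset_Ici_self, ?_⟩
  obtain ⟨c, hc, hle⟩ := hu.exists_pos_le hψ hn hp1 hpn hq hpi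
  have hanti : Antitone fun r => u (max r 1) := fun x y hxy =>
    (hu.strictAntiOn hψ hp1).antitoneOn (zero_le_one.trans (le_max_right x 1))
      (zero_le_one.trans (le_max_right y 1)) (max_le_max_right 1 hxy)
  have hbdd : BddBelow (Set.range fun r => u (max r 1)) :=
    ⟨c, by rintro _ ⟨r, rfl⟩; exact hle _ (le_max_right r 1)⟩
  refine ⟨⨅ r, u (max r 1), hc.trans_le (le_ciInf fun r => hle _ (le_max_right r 1)),
    (tendsto_atTop_ciInf hanti hbdd).congr' ?_⟩
  filter_upwards [eventually_ge_atTop 1] with r hr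
  rw [max_eq_left hr]
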